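/- arXiv:2008.00221 — 2 statements merged into one kernel-verified Lean document; each statement's English description precedes it below -/
import Mathlib

section
/- The operator U_C : L²(𝕋) → L²(ℝ) defined by (U_C f)(x) = π^{-1/2}(x+i)^{-1} f((x-i)/(x+i)) is unitary and maps the Hardy space H²(𝕋) onto the Hardy space H²(ℝ). -/
open MeasureTheory Real AddCircle

open scoped FourierTransform

noncomputable section

local instance : Fact (0 < 2 * π) := ⟨Real.two_pi_pos⟩

/-- `L²` of the circle (with normalized Haar measure). -/
abbrev L2T := Lp ℂ 2 (@haarAddCircle (2 * π) _)

open Filter Topology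

lemma gam_int (k : ℕ) {a : ℂ} (ha : 0 < a.re) :
    IntegrableOn (fun t : ℝ => (t : ℂ) ^ k * Complex.exp (-a * t)) (Set.Ioi 0) volume := by
  have h := integrableOn_rpow_mul_exp_neg_mul_rpow (p := 1) (s := k) (b := a.re)
    (by have : (0:ℝ) ≤ k := Nat.cast_nonneg k
        linarith) one_pos ha
  refine Integrable.mono h ?_ ?_
  · exact (by fun_prop : Continuous (fun t : ℝ => (t : ℂ) ^ k * Complex.exp (-a * t))).aestronglyMeasurable
  · refine (ae_restrict_iff' measurableSet_Ioi).2 (Eventually.of_forall fun t ht => ?_)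
    have ht' : 0 < t := ht
    simp [Complex.norm_exp]

lemma gam_tendsto (k : ℕ) {a : ℂ} (ha : 0 < a.re) :
    Tendsto (fun t : ℝ => (t : ℂ) ^ k * Complex.exp (-a * t)) atTop (𝓝 0) := by
  rw [tendsto_zero_iff_norm_tendsto_zero]
  have h := tendsto_rpow_mul_exp_neg_mul_atTop_nhds_zero k a.re ha
  refine h.congr' ?_
  filter_upwards [eventually_gt_atTop 0] with t ht
  simp [Complex.norm_exp, abs_of_pos ht]

lemma gam_val (k : ℕ) {a : ℂ} (ha : 0 < a.re) :
    ∫ t in Set.Ioi (0:ℝ), (t : ℂ) ^ k * Complex.exp (-a * t) = k.factorial * (a⁻¹) ^ (k + 1) := by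
  have ha0 : a ≠ 0 := by rintro rfl; simp at ha
  have hE : ∀ t : ℝ, HasDerivAt (fun t : ℝ => Complex.exp (-a * t)) (Complex.exp (-a * t) * (-a)) t := by
    intro t
    have h1 : HasDerivAt (fun t : ℝ => -a * (t : ℂ)) (-a) t := by
      simpa using (Complex.ofRealCLM.hasDerivAt (x := t)).const_mul (-a)
    exact h1.cexp
  have hP : ∀ (n : ℕ) (t : ℝ), HasDerivAt (fun t : ℝ => (t : ℂ) ^ n) (n * (t : ℂ) ^ (n - 1)) t := by
    intro n t
    have h1 : HasDerivAt (fun t : ℝ => (t : ℂ)) 1 t := by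
      exact (hasDerivAt_id t).ofReal_comp
    have h2 := h1.pow n
    rw [mul_one] at h2
    exact h2
  induction k with
  | zero =>
    have h := integral_Ioi_of_hasDerivAt_of_tendsto (a := (0:ℝ)) (m := (0:ℂ))
      (f := fun t : ℝ => Complex.exp (-a * t))
      (f' := fun t : ℝ => Complex.exp (-a * t) * (-a)) (hE 0).continuousAt.continuousWithinAt
      (fun t _ => hE t) (by simpa [IntegrableOn] using (gam_int 0 ha).mul_const (-a))
      (by simpa using gam_tendsto 0 ha)
    rw [integral_mul_const] at h
    simp only [Complex.ofReal_zero, mul_zero, Complex.exp_zero] at h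
    simp only [pow_zero, one_mul, Nat.factorial_zero, Nat.cast_one, zero_add, pow_one]
    refine eq_inv_of_mul_eq_one_left ?_
    linear_combination -h
  | succ k ih =>
    have h := integral_Ioi_of_hasDerivAt_of_tendsto (a := (0:ℝ)) (m := (0:ℂ))
      (f := fun t : ℝ => (t : ℂ) ^ (k+1) * Complex.exp (-a * t))
      (f' := fun t : ℝ => (k+1 : ℂ) * ((t : ℂ) ^ k * Complex.exp (-a * t))
         + (-a) * ((t : ℂ) ^ (k+1) * Complex.exp (-a * t)))
      ((hP (k+1) 0).mul (hE 0)).continuousAt.continuousWithinAt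
      (fun t _ => by
        refine ((hP (k+1) t).mul (hE t)).congr_deriv ?_
        rw [Nat.add_sub_cancel]
        push_cast
        ring)
      (((gam_int k ha).const_mul _).add ((gam_int (k+1) ha).const_mul _))
      (gam_tendsto (k+1) ha)
    rw [integral_add ((gam_int k ha).const_mul _) ((gam_int (k+1) ha).const_mul _),
      integral_const_mul, integral_const_mul, ih] at h
    simp only [Complex.ofReal_zero, ne_eq, Nat.add_eq_zero_iff, one_ne_zero, and_false,
      not_false_eq_true, zero_pow, zero_mul, sub_zero] at h
    rw [Nat.factorial_succ]
    push_cast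
    have : ∫ t in Set.Ioi (0:ℝ), (t : ℂ) ^ (k+1) * Complex.exp (-a * t)
      = a⁻¹ * ((k+1 : ℂ) * (k.factorial * (a⁻¹) ^ (k + 1))) := by
      field_simp at h ⊢
      linear_combination -h
    rw [this]; ring

lemma xi_ne (x : ℝ) : (x : ℂ) + Complex.I ≠ 0 := by
  intro h
  have := congrArg Complex.im h
  simp at this

lemma xmi_ne (x : ℝ) : (x : ℂ) - Complex.I ≠ 0 := by
  intro h
  have := congrArg Complex.im h
  simp at this

lemma normSq_xi (x : ℝ) : ‖(x : ℂ) + Complex.I‖ ^ 2 = 1 + x ^ 2 := by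
  rw [← Complex.normSq_eq_norm_sq, Complex.normSq_apply]
  simp; ring

lemma norm_xmi (x : ℝ) : ‖(x : ℂ) - Complex.I‖ = ‖(x : ℂ) + Complex.I‖ := by
  rw [← Complex.norm_conj]
  simp

lemma one_le_norm_xi (x : ℝ) : 1 ≤ ‖(x : ℂ) + Complex.I‖ := by
  have := normSq_xi x
  nlinarith [norm_nonneg ((x : ℂ) + Complex.I), sq_nonneg x]

/-- The integrable model functions. -/
def ww (n m : ℕ) (x : ℝ) : ℂ :=
  ((x : ℂ) - Complex.I) ^ n * (((x : ℂ) + Complex.I)⁻¹) ^ (n + m)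

lemma ww_cont (n m : ℕ) : Continuous (ww n m) := by
  unfold ww
  exact (by fun_prop : Continuous fun x : ℝ => ((x : ℂ) - Complex.I) ^ n).mul
    (((by fun_prop : Continuous fun x : ℝ => (x : ℂ) + Complex.I).inv₀ xi_ne).pow _)

lemma ww_norm (n m : ℕ) (x : ℝ) : ‖ww n m x‖ = (‖(x : ℂ) + Complex.I‖⁻¹) ^ m := by
  have h : ‖(x : ℂ) + Complex.I‖ ≠ 0 := by simpa using xi_ne x
  rw [ww, norm_mul, norm_pow, norm_pow, norm_inv, norm_xmi, pow_add, ← mul_assoc, ← mul_pow,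
    mul_inv_cancel₀ h, one_pow, one_mul]

lemma ww_int (n m : ℕ) (hm : 2 ≤ m) : Integrable (ww n m) volume := by
  refine integrable_inv_one_add_sq.mono (ww_cont n m).aestronglyMeasurable
    (Eventually.of_forall fun x => ?_)
  rw [ww_norm, ← normSq_xi, ← inv_pow, norm_pow, norm_inv, norm_norm]
  exact pow_le_pow_of_le_one (by positivity) (inv_le_one_of_one_le₀ (one_le_norm_xi x)) hm

/-- Truncated Gamma density. -/
def pp (k : ℕ) (t : ℝ) : ℂ :=
  (max t 0 : ℝ) ^ (k + 1) * Complex.exp (-(2 * π : ℝ) * t)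

lemma pp_cont (k : ℕ) : Continuous (pp k) := by
  unfold pp; fun_prop

lemma pp_eq (k : ℕ) : pp k = (Set.Ioi (0:ℝ)).indicator
    (fun t : ℝ => (t : ℂ) ^ (k+1) * Complex.exp (-((2 * π : ℝ) : ℂ) * t)) := by
  funext t
  by_cases ht : 0 < t
  · simp [pp, ht, max_eq_left ht.le]
  · simp [pp, ht, max_eq_right (not_lt.1 ht)]

lemma pp_int (k : ℕ) : Integrable (pp k) volume := by
  rw [pp_eq, integrable_indicator_iff measurableSet_Ioi]
  exact gam_int (k+1) (a := ((2 * π : ℝ) : ℂ)) (by simpa using Real.two_pi_pos)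

lemma pp_inv (k : ℕ) (x : ℝ) : 𝓕⁻ (pp k) x =
    ((k+1).factorial * ((-(2 * π * Complex.I) : ℂ)⁻¹) ^ (k+2)) * ww 0 (k+2) x := by
  have ha : 0 < (-(2 * π * Complex.I) * ((x : ℂ) + Complex.I)).re := by
    simp [Real.pi_pos]
  rw [Real.fourierInv_eq', pp_eq]
  have : ∀ v : ℝ, Complex.exp (((2 * π * inner ℝ v x : ℝ) : ℂ) * Complex.I) • (Set.Ioi (0:ℝ)).indicator
    (fun t : ℝ => (t : ℂ) ^ (k+1) * Complex.exp (-((2 * π : ℝ) : ℂ) * t)) v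
    = (Set.Ioi (0:ℝ)).indicator (fun t : ℝ => (t : ℂ) ^ (k+1) *
      Complex.exp (-(-(2 * π * Complex.I) * ((x : ℂ) + Complex.I)) * t)) v := by
    intro v
    by_cases hv : v ∈ Set.Ioi (0:ℝ)
    · rw [Set.indicator_of_mem hv, Set.indicator_of_mem hv, smul_eq_mul, mul_left_comm,
        ← Complex.exp_add]
      congr 2
      simp
      linear_combination (-2 * π * v : ℂ) * Complex.I_sq
    · rw [Set.indicator_of_notMem hv, Set.indicator_of_notMem hv, smul_zero]
  rw [integral_congr_ae (Eventually.of_forall this), integral_indicator measurableSet_Ioi,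
    gam_val _ ha, ww, mul_inv, mul_pow]
  simp [mul_assoc]

lemma fourier_ww_zero (k : ℕ) (ξ : ℝ) (hξ : ξ < 0) : 𝓕 (ww 0 (k+2)) ξ = 0 := by
  set c : ℂ := ((k+1).factorial * ((-(2 * π * Complex.I) : ℂ)⁻¹) ^ (k+2)) with hc
  have hc0 : c ≠ 0 := by
    have : (π : ℂ) ≠ 0 := by exact_mod_cast Real.pi_ne_zero
    have h2 : ((k+1).factorial : ℂ) ≠ 0 := by exact_mod_cast (Nat.factorial_ne_zero _)
    simp [hc, this, h2]
  have h1 : 𝓕⁻ (pp k) = c • ww 0 (k+2) := by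
    funext x; exact pp_inv k x
  have hint : Integrable (𝓕 (pp k)) volume := by
    have h2 : Integrable (𝓕⁻ (pp k)) volume := by
      rw [h1]; exact (ww_int 0 (k+2) (by omega)).smul c
    have h3 : 𝓕 (pp k) = fun x => 𝓕⁻ (pp k) (-x) := by
      funext x; rw [Real.fourierInv_eq_fourier_neg, neg_neg]
    rw [h3]; exact h2.comp_neg
  have h4 := (pp_cont k).fourier_fourierInv_eq (pp_int k) hint
  rw [h1] at h4
  have h5 := congrFun h4 ξ
  have h6 : 𝓕 (c • ww 0 (k+2)) ξ = c * 𝓕 (ww 0 (k+2)) ξ := by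
    rw [Real.fourier_eq, Real.fourier_eq, ← integral_const_mul]
    congr 1; funext v
    simp [Circle.smul_def]; ring
  rw [h6, pp_eq, Set.indicator_of_notMem (by simp [hξ.le])] at h5
  exact (mul_eq_zero.1 h5).resolve_left hc0

lemma fourier_ww (n : ℕ) : ∀ (k : ℕ) (ξ : ℝ), ξ < 0 → 𝓕 (ww n (k+2)) ξ = 0 := by
  induction n with
  | zero => exact fourier_ww_zero
  | succ n ih =>
    intro k ξ hξ
    have h1 : ∀ x, ww (n+1) (k+2) x = ww n (k+2) x - 2 * Complex.I * ww n (k+1+2) x := by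
      intro x
      have := xi_ne x
      simp only [ww]
      have e : ((x:ℂ) + Complex.I)⁻¹ ^ (n + 1 + (k+2)) = ((x:ℂ) + Complex.I)⁻¹ ^ (n + (k+1+2)) := by
        congr 1; omega
      have e2 : ((x:ℂ) + Complex.I)⁻¹ ^ (n + (k+2)) =
          ((x:ℂ) + Complex.I) * ((x:ℂ) + Complex.I)⁻¹ ^ (n + (k+1+2)) := by
        rw [show n + (k+1+2) = (n + (k+2)) + 1 by omega, pow_succ]
        field_simp
      rw [e, e2]; ring
    have h2 := ih k ξ hξ
    have h3 := ih (k+1) ξ hξ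
    rw [Real.fourier_eq] at h2 h3 ⊢
    have i1 := (Real.fourierIntegral_convergent_iff (V := ℝ) (μ := volume) (f := ww n (k+2)) ξ).2
      (ww_int n (k+2) (by omega))
    have i2 := (Real.fourierIntegral_convergent_iff (V := ℝ) (μ := volume) (f := ww n (k+1+2)) ξ).2
      (ww_int n (k+1+2) (by omega))
    have : ∀ v : ℝ, 𝐞 (-inner ℝ v ξ) • ww (n+1) (k+2) v =
       𝐞 (-inner ℝ v ξ) • ww n (k+2) v - 2 * Complex.I * (𝐞 (-inner ℝ v ξ) • ww n (k+1+2) v) := by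
      intro v; rw [h1]; simp only [Circle.smul_def, smul_eq_mul]; ring
    rw [integral_congr_ae (Eventually.of_forall this), integral_sub i1 (i2.const_mul _),
      integral_const_mul, h2, h3]
    simp

lemma fourier_conj (f : ℝ → ℂ) (ξ : ℝ) :
    𝓕 (fun x => (starRingEnd ℂ) (f x)) ξ = (starRingEnd ℂ) (𝓕 f (-ξ)) := by
  rw [Real.fourier_eq', Real.fourier_eq', ← integral_conj]
  congr 1; funext v
  rw [smul_eq_mul, smul_eq_mul, map_mul, ← Complex.exp_conj, map_mul, Complex.conj_ofReal,
    Complex.conj_I, inner_neg_right, mul_neg, mul_neg]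
  push_cast
  ring_nf

/-- The multiplier. -/
def cc (x : ℝ) : ℂ := ((Real.sqrt π : ℂ))⁻¹ * ((x : ℂ) + Complex.I)⁻¹

/-- The Cayley transform. -/
def CC (x : ℝ) : ℂ := ((x : ℂ) - Complex.I) / ((x : ℂ) + Complex.I)

/-- The Cayley transform as a map into the additive circle. -/
def th (x : ℝ) : AddCircle (2 * π) := ((Complex.arg (CC x) : ℝ) : AddCircle (2 * π))

/-- The Cauchy measure. -/
def nu : Measure ℝ := volume.withDensity (fun x => ((‖cc x‖₊ ^ 2 : NNReal) : ENNReal))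

lemma CC_norm (x : ℝ) : ‖CC x‖ = 1 := by
  rw [CC, norm_div, norm_xmi, div_self (by simpa using xi_ne x)]

lemma CC_ne (x : ℝ) : CC x ≠ 0 := div_ne_zero (xmi_ne x) (xi_ne x)

lemma CC_cont : Continuous CC := by
  unfold CC
  exact (by fun_prop : Continuous fun x : ℝ => ((x : ℂ) - Complex.I)).div
    (by fun_prop : Continuous fun x : ℝ => (x : ℂ) + Complex.I) xi_ne

lemma cc_cont : Continuous cc := by
  unfold cc
  exact continuous_const.mul
    ((by fun_prop : Continuous fun x : ℝ => (x : ℂ) + Complex.I).inv₀ xi_ne)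

lemma cc_ne (x : ℝ) : cc x ≠ 0 := by
  have : Real.sqrt π ≠ 0 := (Real.sqrt_pos.2 Real.pi_pos).ne'
  exact mul_ne_zero (inv_ne_zero (by exact_mod_cast this)) (inv_ne_zero (xi_ne x))

lemma cc_norm_sq (x : ℝ) : ‖cc x‖ ^ 2 = π⁻¹ * (1 + x ^ 2)⁻¹ := by
  rw [cc, norm_mul, mul_pow, norm_inv, norm_inv, inv_pow, inv_pow, normSq_xi, Complex.norm_real,
    Real.norm_eq_abs, sq_abs, Real.sq_sqrt Real.pi_pos.le]

lemma th_meas : Measurable th := by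
  unfold th
  exact (AddCircle.measurable_mk').comp (Complex.measurable_arg.comp CC_cont.measurable)

lemma exp_arg_CC (x : ℝ) : Complex.exp ((Complex.arg (CC x) : ℂ) * Complex.I) = CC x := by
  have := Complex.norm_mul_exp_arg_mul_I (CC x)
  rwa [CC_norm, Complex.ofReal_one, one_mul] at this

lemma fourier_th (n : ℤ) (x : ℝ) : fourier n (th x) = CC x ^ n := by
  rw [th, fourier_coe_apply]
  conv_rhs => rw [← exp_arg_CC, ← Complex.exp_int_mul]
  congr 1
  have : (π : ℂ) ≠ 0 := by exact_mod_cast Real.pi_ne_zero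
  push_cast
  field_simp

lemma cc2_int : Integrable (fun x => ‖cc x‖ ^ 2) volume := by
  simp_rw [cc_norm_sq]
  exact integrable_inv_one_add_sq.const_mul _

lemma cc2_val : ∫ x, ‖cc x‖ ^ 2 = 1 := by
  simp_rw [cc_norm_sq]
  rw [integral_const_mul, integral_univ_inv_one_add_sq, inv_mul_cancel₀ Real.pi_ne_zero]

instance nu_fin : IsFiniteMeasure nu := by
  refine isFiniteMeasure_withDensity ?_
  have h := cc2_int.2
  rw [HasFiniteIntegral] at h
  refine (lt_of_le_of_lt (lintegral_mono fun x => ?_) h).ne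
  simp [enorm_eq_nnnorm]

lemma nu_meas : Measurable (fun x => (‖cc x‖₊ ^ 2 : NNReal)) :=
  (cc_cont.nnnorm.pow 2).measurable

lemma nu_integral (g : ℝ → ℂ) : ∫ x, g x ∂nu = ∫ x, ((‖cc x‖ ^ 2 : ℝ) : ℂ) * g x := by
  rw [nu, integral_withDensity_eq_integral_smul nu_meas]
  congr 1

lemma CC_tendsto_inv {l : Filter ℝ} (h : Tendsto (fun x : ℝ => ‖(x : ℂ) + Complex.I‖) l atTop) :
    Tendsto CC l (𝓝 1) := by
  have h1 : Tendsto (fun x : ℝ => 1 - 2 * Complex.I * ((x : ℂ) + Complex.I)⁻¹) l (𝓝 (1 - 2 * Complex.I * 0)) := by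
    refine tendsto_const_nhds.sub (tendsto_const_nhds.mul ?_)
    rw [tendsto_zero_iff_norm_tendsto_zero]
    simp_rw [norm_inv]
    exact h.inv_tendsto_atTop
  rw [mul_zero, sub_zero] at h1
  refine h1.congr fun x => ?_
  have := xi_ne x
  rw [CC]; field_simp; ring

lemma abs_le_norm_xi (x : ℝ) : |x| ≤ ‖(x : ℂ) + Complex.I‖ := by
  simpa using Complex.abs_re_le_norm ((x : ℂ) + Complex.I)

lemma CC_deriv (x : ℝ) : HasDerivAt CC (2 * Complex.I * (((x : ℂ) + Complex.I)⁻¹) ^ 2) x := by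
  have h0 : HasDerivAt (fun t : ℝ => (t : ℂ)) 1 x := (hasDerivAt_id x).ofReal_comp
  have h := (h0.sub_const Complex.I).div (h0.add_const Complex.I) (xi_ne x)
  refine h.congr_deriv ?_
  have := xi_ne x
  field_simp
  ring

lemma nu_CC (n : ℤ) (hn : n ≠ 0) : ∫ x, CC x ^ n ∂nu = 0 := by
  rw [nu_integral]
  have hpi : (π : ℂ) ≠ 0 := by exact_mod_cast Real.pi_ne_zero
  have hn' : (n : ℂ) ≠ 0 := by exact_mod_cast hn
  have key : ∀ x, HasDerivAt (fun x => (2 * π * Complex.I * n)⁻¹ * CC x ^ n)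
      (((‖cc x‖ ^ 2 : ℝ) : ℂ) * CC x ^ n) x := by
    intro x
    have h := ((hasDerivAt_zpow n (CC x) (Or.inl (CC_ne x))).scomp x (CC_deriv x)).const_mul
      ((2 * π * Complex.I * n : ℂ)⁻¹)
    refine h.congr_deriv ?_
    have h1 := xi_ne x
    have h2 := xmi_ne x
    have h3 := CC_ne x
    rw [cc_norm_sq, zpow_sub_one₀ h3, smul_eq_mul]
    push_cast
    have h4 : (1 + (x:ℂ) ^ 2) = ((x : ℂ) - Complex.I) * ((x : ℂ) + Complex.I) := by
      linear_combination Complex.I_sq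
    have h5 : (CC x)⁻¹ = ((x : ℂ) + Complex.I) / ((x : ℂ) - Complex.I) := by
      rw [CC, inv_div]
    rw [h4, h5]
    generalize CC x ^ n = z
    have := Complex.I_ne_zero
    field_simp
  have hz : ∀ l : Filter ℝ, Tendsto CC l (𝓝 1) →
      Tendsto (fun x => (2 * π * Complex.I * n : ℂ)⁻¹ * CC x ^ n) l (𝓝 ((2 * π * Complex.I * n : ℂ)⁻¹ * 1)) := by
    intro l hl
    have := hl.zpow₀ n (Or.inl one_ne_zero)
    rw [one_zpow] at this
    exact tendsto_const_nhds.mul this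
  have hint : Integrable (fun x => ((‖cc x‖ ^ 2 : ℝ) : ℂ) * CC x ^ n) volume := by
    refine cc2_int.mono ?_ (Eventually.of_forall fun x => ?_)
    · exact ((Complex.continuous_ofReal.comp (cc_cont.norm.pow 2)).mul
        (CC_cont.zpow₀ n fun x => Or.inl (CC_ne x))).aestronglyMeasurable
    · simp [CC_norm]
  rw [integral_of_hasDerivAt_of_tendsto key hint
    (hz _ (CC_tendsto_inv (tendsto_atTop_mono abs_le_norm_xi tendsto_abs_atBot_atTop)))
    (hz _ (CC_tendsto_inv (tendsto_atTop_mono abs_le_norm_xi tendsto_abs_atTop_atTop))), sub_self]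

lemma nu_one : ∫ _, (1 : ℂ) ∂nu = 1 := by
  rw [nu_integral]
  simp_rw [mul_one]
  rw [integral_complex_ofReal, cc2_val, Complex.ofReal_one]

lemma haar_fourier (n : ℤ) : ∫ t, fourier n t ∂(haarAddCircle (T := 2 * π)) = if n = 0 then 1 else 0 := by
  split_ifs with h
  · subst h; simp
  · exact integral_eq_zero_of_add_right_eq_neg (fourier_add_half_inv_index h Real.two_pi_pos)

lemma map_nu_fourier (n : ℤ) : ∫ t, fourier n t ∂(nu.map th) = if n = 0 then 1 else 0 := by
  rw [integral_map th_meas.aemeasurable (fourier n).continuous.aestronglyMeasurable]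
  simp_rw [fourier_th]
  split_ifs with h
  · subst h; simpa using nu_one
  · exact nu_CC n h

lemma map_nu : nu.map th = haarAddCircle (T := 2 * π) := by
  have : IsFiniteMeasure (nu.map th) := inferInstance
  have key : ∀ f : C(AddCircle (2 * π), ℂ), ∫ t, f t ∂(nu.map th) = ∫ t, f t ∂(haarAddCircle (T := 2 * π)) := by
    have hint : ∀ (μ : Measure (AddCircle (2 * π))) [IsFiniteMeasure μ] (f : C(AddCircle (2 * π), ℂ)),
        Integrable f μ := fun μ _ f =>
      f.continuous.integrable_of_hasCompactSupport (HasCompactSupport.of_compactSpace f)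
    have hcont : ∀ (μ : Measure (AddCircle (2 * π))) [IsFiniteMeasure μ],
        Continuous (fun f : C(AddCircle (2 * π), ℂ) => ∫ t, f t ∂μ) := by
      intro μ _
      refine (LipschitzWith.of_dist_le_mul (K := (μ Set.univ).toNNReal) fun f g => ?_).continuous
      rw [dist_eq_norm, ← integral_sub (hint μ f) (hint μ g), mul_comm ((μ Set.univ).toNNReal : ℝ)]
      refine (norm_integral_le_of_norm_le_const (C := dist f g) (Eventually.of_forall fun t => ?_))
      rw [← dist_eq_norm]; exact ContinuousMap.dist_apply_le_dist t
    intro f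
    have hf : f ∈ (Submodule.span ℂ (Set.range (fourier (T := 2 * π)))).topologicalClosure := by
      rw [span_fourier_closure_eq_top]; trivial
    have hcl : IsClosed {f : C(AddCircle (2 * π), ℂ) | ∫ t, f t ∂(nu.map th) = ∫ t, f t ∂(haarAddCircle (T := 2 * π))} :=
      isClosed_eq (hcont _) (hcont _)
    refine closure_minimal ?_ hcl hf
    intro g hg
    induction hg using Submodule.span_induction with
    | mem x h =>
      obtain ⟨n, rfl⟩ := h
      exact (map_nu_fourier n).trans (haar_fourier n).symm
    | zero => simp
    | add x y _ _ hx hy =>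
      simp only [Set.mem_ofPred_eq, ContinuousMap.add_apply] at *
      rw [integral_add (hint _ x) (hint _ y), integral_add (hint _ x) (hint _ y), hx, hy]
    | smul a x _ hx =>
      simp only [Set.mem_ofPred_eq, ContinuousMap.smul_apply] at *
      rw [integral_smul, integral_smul, hx]
  refine ext_of_forall_integral_eq_of_IsFiniteMeasure fun f => ?_
  have h := key ⟨fun t => (f t : ℂ), Complex.continuous_ofReal.comp f.continuous⟩
  simp only [ContinuousMap.coe_mk] at h
  rw [integral_complex_ofReal, integral_complex_ofReal] at h
  exact_mod_cast h

lemma vol_ac : (volume : Measure ℝ) ≪ nu :=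
  withDensity_absolutelyContinuous' nu_meas.coe_nnreal_ennreal.aemeasurable
    (Eventually.of_forall fun x => by simpa using cc_ne x)

lemma th_mp : MeasurePreserving th nu (haarAddCircle (T := 2 * π)) := ⟨th_meas, map_nu⟩

lemma th_qmp : Measure.QuasiMeasurePreserving th volume (haarAddCircle (T := 2 * π)) :=
  ⟨th_meas, (vol_ac.map th_meas).trans map_nu.absolutelyContinuous⟩

lemma nu_eLp (g : ℝ → ℂ) : eLpNorm (fun x => cc x * g x) 2 volume = eLpNorm g 2 nu := by
  rw [eLpNorm_eq_lintegral_rpow_enorm_toReal (by norm_num) (by norm_num),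
    eLpNorm_eq_lintegral_rpow_enorm_toReal (by norm_num) (by norm_num), nu,
    lintegral_withDensity_eq_lintegral_mul_non_measurable _ nu_meas.coe_nnreal_ennreal
      (Eventually.of_forall fun x => ENNReal.coe_lt_top)]
  congr 2; funext x
  simp [mul_pow, enorm_eq_nnnorm]

lemma U_eLp {f : AddCircle (2 * π) → ℂ} (hf : AEStronglyMeasurable f (haarAddCircle (T := 2 * π))) :
    eLpNorm (fun x => cc x * f (th x)) 2 volume = eLpNorm f 2 (haarAddCircle (T := 2 * π)) := by
  rw [nu_eLp (fun x => f (th x))]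
  exact eLpNorm_comp_measurePreserving hf th_mp

lemma U_memLp {f : AddCircle (2 * π) → ℂ} (hf : MemLp f 2 (haarAddCircle (T := 2 * π))) :
    MemLp (fun x => cc x * f (th x)) 2 volume :=
  ⟨cc_cont.aestronglyMeasurable.mul (hf.1.comp_quasiMeasurePreserving th_qmp),
    by rw [U_eLp hf.1]; exact hf.2⟩

/-- The Cayley operator as a linear isometry. -/
def Uiso : L2T →ₗᵢ[ℂ] Lp ℂ 2 (volume : Measure ℝ) where
  toFun f := (U_memLp (Lp.memLp f)).toLp _
  map_add' f g := by
    rw [← MemLp.toLp_add]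
    refine MemLp.toLp_congr _ _ ?_
    filter_upwards [th_qmp.ae (Lp.coeFn_add f g)] with x hx
    rw [Pi.add_apply, hx, Pi.add_apply, mul_add]
  map_smul' c f := by
    rw [RingHom.id_apply, ← MemLp.toLp_const_smul]
    refine MemLp.toLp_congr _ _ ?_
    filter_upwards [th_qmp.ae (Lp.coeFn_smul c f)] with x hx
    simp [hx, mul_left_comm]
  norm_map' f := by
    change ‖(U_memLp (Lp.memLp f)).toLp _‖ = ‖f‖
    rw [Lp.norm_toLp, U_eLp (Lp.memLp f).1, Lp.norm_def]

lemma Uiso_coe (f : L2T) : (Uiso f : ℝ → ℂ) =ᵐ[volume] fun x => cc x * f (th x) :=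
  MemLp.coeFn_toLp (U_memLp (Lp.memLp f))

/-- Left inverse of the Cayley transform. -/
def sg (t : AddCircle (2 * π)) : ℝ :=
  (Complex.I * (1 + fourier 1 t) / (1 - fourier 1 t)).re

lemma sg_th (x : ℝ) : sg (th x) = x := by
  rw [sg, fourier_th, zpow_one, CC]
  have h := xi_ne x
  have h1 : (1 : ℂ) + ((x : ℂ) - Complex.I) / ((x : ℂ) + Complex.I) = 2 * x / ((x : ℂ) + Complex.I) := by
    field_simp; ring
  have h2 : (1 : ℂ) - ((x : ℂ) - Complex.I) / ((x : ℂ) + Complex.I) = 2 * Complex.I / ((x : ℂ) + Complex.I) := by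
    field_simp; ring
  have h3 : Complex.I * (2 * x / ((x : ℂ) + Complex.I)) / (2 * Complex.I / ((x : ℂ) + Complex.I)) = x := by
    have := Complex.I_ne_zero
    field_simp
  rw [h1, h2, h3, Complex.ofReal_re]

lemma sg_meas : Measurable sg := by
  have h : Measurable (fun t : AddCircle (2 * π) => (fourier 1 t : ℂ)) := (fourier 1).continuous.measurable
  exact Complex.measurable_re.comp
    (((h.const_add 1).const_mul Complex.I).div (h.const_sub 1))

lemma Uiso_surj : Function.Surjective Uiso := by
  intro g
  have hg := (Lp.memLp g).1
  set g' := hg.mk g with hg'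
  have hm : StronglyMeasurable g' := hg.stronglyMeasurable_mk
  set f : AddCircle (2 * π) → ℂ := fun t => (cc (sg t))⁻¹ * g' (sg t) with hf
  have hfm : AEStronglyMeasurable f (haarAddCircle (T := 2 * π)) := by
    have h1 : Measurable fun t => (cc (sg t))⁻¹ := (cc_cont.measurable.comp sg_meas).inv
    exact (h1.mul (hm.measurable.comp sg_meas)).aestronglyMeasurable
  have hfx : ∀ x, cc x * f (th x) = g' x := by
    intro x
    simp only [hf, sg_th]
    rw [mul_inv_cancel_left₀ (cc_ne x)]
  have hL : MemLp f 2 (haarAddCircle (T := 2 * π)) := by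
    refine ⟨hfm, ?_⟩
    rw [← U_eLp hfm]
    simp_rw [hfx]
    rw [← eLpNorm_congr_ae hg.ae_eq_mk]
    exact (Lp.memLp g).2
  refine ⟨hL.toLp f, ?_⟩
  refine Lp.ext ?_
  filter_upwards [Uiso_coe (hL.toLp f), th_qmp.ae hL.coeFn_toLp, hg.ae_eq_mk] with x h1 h2 h3
  rw [h1, h2, hfx, h3]

/-- The Cayley unitary. -/
def UU : L2T ≃ₗᵢ[ℂ] Lp ℂ 2 (volume : Measure ℝ) := LinearIsometryEquiv.ofSurjective Uiso Uiso_surj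

lemma UU_coe (f : L2T) : (UU f : ℝ → ℂ) =ᵐ[volume] fun x => cc x * f (th x) := Uiso_coe f

lemma UU_fourier (n : ℤ) : (UU (fourierBasis n) : ℝ → ℂ) =ᵐ[volume] fun x => cc x * CC x ^ n := by
  rw [coe_fourierBasis]
  filter_upwards [UU_coe (fourierLp 2 n), th_qmp.ae (coeFn_fourierLp 2 n)] with x h1 h2
  rw [h1, h2, fourier_th]

/-- A sequence in L² which is orthonormal and constant on `S` vanishes on `S`. -/
lemma ortho_vanish {v : ℕ → Lp ℂ 2 (volume : Measure ℝ)} (hv : Orthonormal ℂ v) {S : Set ℝ}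
    (hS : MeasurableSet S)
    (h : ∀ n, ∀ᵐ ξ ∂(volume : Measure ℝ), ξ ∈ S → (v n : ℝ → ℂ) ξ = (v (n+1) : ℝ → ℂ) ξ) (n : ℕ) :
    ∀ᵐ ξ ∂(volume : Measure ℝ), ξ ∈ S → (v n : ℝ → ℂ) ξ = 0 := by
  have h0 : ∀ n, ∀ᵐ ξ ∂(volume : Measure ℝ), ξ ∈ S → (v n : ℝ → ℂ) ξ = (v 0 : ℝ → ℂ) ξ := by
    intro n
    induction n with
    | zero => exact Eventually.of_forall fun _ _ => rfl
    | succ n ih =>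
      filter_upwards [ih, h n] with ξ h1 h2 hξ
      rw [← h2 hξ, h1 hξ]
  have hL := (Lp.memLp (v 0)).indicator hS
  set w : Lp ℂ 2 (volume : Measure ℝ) := hL.toLp _ with hw
  have hwc : (w : ℝ → ℂ) =ᵐ[volume] S.indicator (v 0) := hL.coeFn_toLp
  have hin : ∀ n, inner ℂ (v n) w = inner ℂ w w := by
    intro n
    rw [L2.inner_def, L2.inner_def]
    refine integral_congr_ae ?_
    filter_upwards [hwc, h0 n] with ξ h1 h2
    rw [h1]
    by_cases hξ : ξ ∈ S
    · simp [hξ, h2 hξ]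
    · simp [hξ]
  have hs := (hv.inner_products_summable w).tendsto_atTop_zero
  simp_rw [hin] at hs
  have h3 := tendsto_nhds_unique tendsto_const_nhds hs
  have hw0 : w = 0 := by simpa using h3
  rw [hw0] at hwc
  filter_upwards [hwc, h0 n, Lp.coeFn_zero ℂ 2 (volume : Measure ℝ)] with ξ h1 h2 h4 hξ
  rw [h2 hξ]
  rw [h4] at h1
  simpa [hξ] using h1.symm

lemma cc_CC_nat (n : ℕ) (x : ℝ) : cc x * CC x ^ (n : ℤ) - cc x * CC x ^ ((n + 1 : ℕ) : ℤ) =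
    (((Real.sqrt π : ℂ))⁻¹ * (2 * Complex.I)) * ww n 2 x := by
  have h := xi_ne x
  rw [zpow_natCast, zpow_natCast, cc, CC, ww]
  rw [div_eq_mul_inv, mul_pow, mul_pow]
  have e : ((x : ℂ) + Complex.I) * ((x : ℂ) + Complex.I)⁻¹ = 1 := mul_inv_cancel₀ h
  generalize ((x : ℂ) + Complex.I)⁻¹ = w at e
  linear_combination (-((Real.sqrt π : ℂ))⁻¹ * w * w ^ n * ((x : ℂ) - Complex.I) ^ n) * e

lemma cc_CC_neg (n : ℕ) (x : ℝ) : cc x * CC x ^ (-(n : ℤ) - 1) = (starRingEnd ℂ) (cc x * CC x ^ (n : ℤ)) := by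
  have h := xi_ne x
  have h' := xmi_ne x
  have e : -(n : ℤ) - 1 = -((n + 1 : ℕ) : ℤ) := by push_cast; ring
  rw [e, zpow_neg, zpow_natCast, zpow_natCast, cc, CC]
  simp only [map_mul, map_inv₀, map_pow, map_div₀, map_add, map_sub, Complex.conj_ofReal, Complex.conj_I]
  rw [sub_neg_eq_add, ← sub_eq_add_neg, ← inv_pow, inv_div, pow_succ]
  field_simp

lemma F_of_ae {F : Lp ℂ 2 (volume : Measure ℝ) ≃ₗᵢ[ℂ] Lp ℂ 2 (volume : Measure ℝ)}
    (hF : ∀ g : Lp ℂ 2 (volume : Measure ℝ), Integrable (g : ℝ → ℂ) volume →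
      (F g : ℝ → ℂ) =ᵐ[volume] 𝓕 (g : ℝ → ℂ)) {g : Lp ℂ 2 (volume : Measure ℝ)} {h : ℝ → ℂ}
    (hh : Integrable h volume) (hg : (g : ℝ → ℂ) =ᵐ[volume] h) :
    (F g : ℝ → ℂ) =ᵐ[volume] 𝓕 h := by
  have e : 𝓕 (g : ℝ → ℂ) = 𝓕 h := by
    funext ξ
    rw [Real.fourier_eq, Real.fourier_eq]
    refine integral_congr_ae ?_
    filter_upwards [hg] with x hx
    rw [hx]
  rw [← e]
  exact hF g (hh.congr hg.symm)

lemma fourier_const_mul (c : ℂ) (f : ℝ → ℂ) (ξ : ℝ) : 𝓕 (fun x => c * f x) ξ = c * 𝓕 f ξ := by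
  rw [Real.fourier_eq, Real.fourier_eq, ← integral_const_mul]
  congr 1; funext v
  simp only [Circle.smul_def, smul_eq_mul]; ring

section
variable {F : Lp ℂ 2 (volume : Measure ℝ) ≃ₗᵢ[ℂ] Lp ℂ 2 (volume : Measure ℝ)}

lemma pos_vanish (hF : ∀ g : Lp ℂ 2 (volume : Measure ℝ), Integrable (g : ℝ → ℂ) volume →
      (F g : ℝ → ℂ) =ᵐ[volume] 𝓕 (g : ℝ → ℂ)) (n : ℕ) :
    ∀ᵐ ξ ∂(volume : Measure ℝ), ξ ∈ Set.Iio (0:ℝ) →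
      (F (UU (fourierBasis (n : ℤ))) : ℝ → ℂ) ξ = 0 := by
  have ho : Orthonormal ℂ (fun n : ℕ => F (UU (fourierBasis (T := 2 * π) (n : ℤ)))) :=
    (((fourierBasis (T := 2 * π)).orthonormal.comp (fun n : ℕ => (n : ℤ))
      Nat.cast_injective).comp_linearIsometryEquiv UU).comp_linearIsometryEquiv F
  refine ortho_vanish ho measurableSet_Iio (fun n => ?_) n
  have hg : ((UU (fourierBasis (n : ℤ)) - UU (fourierBasis ((n + 1 : ℕ) : ℤ)) :
      Lp ℂ 2 (volume : Measure ℝ)) : ℝ → ℂ) =ᵐ[volume]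
      fun x => (((Real.sqrt π : ℂ))⁻¹ * (2 * Complex.I)) * ww n 2 x := by
    filter_upwards [Lp.coeFn_sub (UU (fourierBasis (n : ℤ))) (UU (fourierBasis ((n + 1 : ℕ) : ℤ))),
      UU_fourier (n : ℤ), UU_fourier ((n + 1 : ℕ) : ℤ)] with x h1 h2 h3
    rw [h1, Pi.sub_apply, h2, h3, cc_CC_nat]
  have h4 := F_of_ae hF ((ww_int n 2 le_rfl).const_mul _) hg
  rw [map_sub] at h4
  filter_upwards [h4, Lp.coeFn_sub (F (UU (fourierBasis (n : ℤ))))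
    (F (UU (fourierBasis ((n + 1 : ℕ) : ℤ))))] with ξ h5 h6 hξ
  rw [h6, Pi.sub_apply, fourier_const_mul, fourier_ww n 0 ξ hξ, mul_zero] at h5
  exact sub_eq_zero.1 h5

lemma neg_vanish (hF : ∀ g : Lp ℂ 2 (volume : Measure ℝ), Integrable (g : ℝ → ℂ) volume →
      (F g : ℝ → ℂ) =ᵐ[volume] 𝓕 (g : ℝ → ℂ)) (n : ℕ) :
    ∀ᵐ ξ ∂(volume : Measure ℝ), ξ ∈ Set.Ioi (0:ℝ) →
      (F (UU (fourierBasis (-(n : ℤ) - 1))) : ℝ → ℂ) ξ = 0 := by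
  have ho : Orthonormal ℂ (fun n : ℕ => F (UU (fourierBasis (T := 2 * π) (-(n : ℤ) - 1)))) :=
    (((fourierBasis (T := 2 * π)).orthonormal.comp (fun n : ℕ => (-(n : ℤ) - 1))
      (fun a b h => by simp only at h; omega)).comp_linearIsometryEquiv UU).comp_linearIsometryEquiv F
  refine ortho_vanish ho measurableSet_Ioi (fun n => ?_) n
  have hg : ((UU (fourierBasis (-(n : ℤ) - 1)) - UU (fourierBasis (-((n + 1 : ℕ) : ℤ) - 1)) :
      Lp ℂ 2 (volume : Measure ℝ)) : ℝ → ℂ) =ᵐ[volume]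
      fun x => (starRingEnd ℂ) ((((Real.sqrt π : ℂ))⁻¹ * (2 * Complex.I)) * ww n 2 x) := by
    filter_upwards [Lp.coeFn_sub (UU (fourierBasis (-(n : ℤ) - 1)))
      (UU (fourierBasis (-((n + 1 : ℕ) : ℤ) - 1))),
      UU_fourier (-(n : ℤ) - 1), UU_fourier (-((n + 1 : ℕ) : ℤ) - 1)] with x h1 h2 h3
    rw [h1, Pi.sub_apply, h2, h3, ← cc_CC_nat, cc_CC_neg, cc_CC_neg, map_sub]
  have hi : Integrable (fun x => (starRingEnd ℂ)
      ((((Real.sqrt π : ℂ))⁻¹ * (2 * Complex.I)) * ww n 2 x)) volume := by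
    have := ((ww_int n 2 le_rfl).const_mul (((Real.sqrt π : ℂ))⁻¹ * (2 * Complex.I)))
    exact Complex.conjCLE.toContinuousLinearMap.integrable_comp this
  have h4 := F_of_ae hF hi hg
  rw [map_sub] at h4
  filter_upwards [h4, Lp.coeFn_sub (F (UU (fourierBasis (-(n : ℤ) - 1))))
    (F (UU (fourierBasis (-((n + 1 : ℕ) : ℤ) - 1))))] with ξ h5 h6 hξ
  rw [h6, Pi.sub_apply, fourier_conj, fourier_const_mul,
    fourier_ww n 0 (-ξ) (neg_neg_of_pos hξ), mul_zero, map_zero] at h5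
  exact sub_eq_zero.1 h5

end

lemma coeff_inner (F : Lp ℂ 2 (volume : Measure ℝ) ≃ₗᵢ[ℂ] Lp ℂ 2 (volume : Measure ℝ)) (f : L2T) (p : ℤ) :
    fourierCoeff (f : AddCircle (2 * π) → ℂ) p = inner ℂ (F (UU (fourierBasis p))) (F (UU f)) := by
  rw [← fourierBasis_repr, HilbertBasis.repr_apply_apply, LinearIsometryEquiv.inner_map_map,
    LinearIsometryEquiv.inner_map_map]

theorem cayley_unitary_maps_hardy_onto_hardy
    (F : Lp ℂ 2 (volume : Measure ℝ) ≃ₗᵢ[ℂ] Lp ℂ 2 (volume : Measure ℝ))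
    (hF : ∀ g : Lp ℂ 2 (volume : Measure ℝ), Integrable (g : ℝ → ℂ) volume →
      (F g : ℝ → ℂ) =ᵐ[volume] 𝓕 (g : ℝ → ℂ)) :
    ∃ U : L2T ≃ₗᵢ[ℂ] Lp ℂ 2 (volume : Measure ℝ),
      (∀ f : L2T,
        (U f : ℝ → ℂ) =ᵐ[volume] fun x : ℝ =>
          ((Real.sqrt π : ℂ))⁻¹ * ((x : ℂ) + Complex.I)⁻¹ *
            f ((Complex.arg (((x : ℂ) - Complex.I) / ((x : ℂ) + Complex.I)) : ℝ) :
              AddCircle (2 * π))) ∧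
      ∀ f : L2T,
        (∀ p : ℤ, p < 0 → fourierCoeff (f : AddCircle (2 * π) → ℂ) p = 0) ↔
          ∀ᵐ ξ ∂(volume : Measure ℝ), ξ < 0 → (F (U f) : ℝ → ℂ) ξ = 0 := by
  refine ⟨UU, UU_coe, fun f => ⟨fun h => ?_, fun h p hp => ?_⟩⟩
  · have hL := (Lp.memLp (F (UU f))).indicator (measurableSet_Iio (a := (0:ℝ)))
    set w : Lp ℂ 2 (volume : Measure ℝ) := hL.toLp _ with hw
    have hwc : (w : ℝ → ℂ) =ᵐ[volume] (Set.Iio (0:ℝ)).indicator (F (UU f)) := hL.coeFn_toLp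
    obtain ⟨u, hu⟩ : ∃ u, F (UU u) = w := ⟨UU.symm (F.symm w), by simp⟩
    have hcoef : ∀ p : ℤ, fourierCoeff (u : AddCircle (2 * π) → ℂ) p = 0 := by
      intro p
      rw [coeff_inner F, hu]
      rcases lt_or_ge p 0 with hp | hp
      · obtain ⟨n, rfl⟩ : ∃ n : ℕ, p = -(n : ℤ) - 1 := ⟨(-p - 1).toNat, by omega⟩
        rw [← h _ hp, coeff_inner F, L2.inner_def, L2.inner_def]
        refine integral_congr_ae ?_
        filter_upwards [hwc, neg_vanish hF n, Measure.ae_ne volume (0:ℝ)] with ξ h1 h2 h3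
        rcases lt_or_gt_of_ne h3 with h4 | h4
        · rw [h1, Set.indicator_of_mem (by exact h4)]
        · rw [h2 h4, inner_zero_left, inner_zero_left]
      · lift p to ℕ using hp
        rw [L2.inner_def]
        refine integral_eq_zero_of_ae ?_
        filter_upwards [hwc, pos_vanish hF p] with ξ h1 h2
        by_cases hξ : ξ ∈ Set.Iio (0:ℝ)
        · rw [h2 hξ, inner_zero_left]; rfl
        · rw [h1, Set.indicator_of_notMem hξ, inner_zero_right]; rfl
    have hu0 : u = 0 := by
      apply (fourierBasis (T := 2 * π)).repr.injective
      ext p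
      rw [fourierBasis_repr, hcoef, map_zero]; rfl
    rw [hu0, map_zero, map_zero] at hu
    rw [← hu] at hwc
    filter_upwards [hwc, Lp.coeFn_zero ℂ 2 (volume : Measure ℝ)] with ξ h1 h4 hξ
    rw [h4, Set.indicator_of_mem (by exact hξ)] at h1
    exact h1.symm
  · obtain ⟨n, rfl⟩ : ∃ n : ℕ, p = -(n : ℤ) - 1 := ⟨(-p - 1).toNat, by omega⟩
    rw [coeff_inner F, L2.inner_def]
    refine integral_eq_zero_of_ae ?_
    filter_upwards [h, neg_vanish hF n, Measure.ae_ne volume (0:ℝ)] with ξ h1 h2 h3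
    rcases lt_or_gt_of_ne h3 with h4 | h4
    · rw [h1 h4, inner_zero_right]; rfl
    · rw [h2 h4, inner_zero_left]; rfl
end
end

section
/- For a ∈ (0,1) and odd integer p, ∫₀^∞ cos(ax)J_p(x)/x dx = (1/p)cos(p arcsin(a)). -/
open Real

noncomputable section

/-- The Bessel function of the first kind of integer order `p`,
`J_p(x) = (1/π) ∫₀^π cos(pt - x sin t) dt`. -/
def besselJ (p : ℤ) (x : ℝ) : ℝ :=
  (1 / π) * ∫ t in (0 : ℝ)..π, Real.cos (p * t - x * Real.sin t)

/-- Cosine transform of `u ↦ cos (p arcsin u)`. -/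
def besK (p : ℤ) (x : ℝ) : ℝ :=
  ∫ t in (-(π / 2))..(π / 2), Real.cos t * Real.cos (p * t) * Real.cos (x * Real.sin t)

/-- Auxiliary oscillatory integral. -/
def besL (p : ℤ) (x : ℝ) : ℝ :=
  ∫ t in (-(π / 2))..(π / 2), Real.sin (p * t) * Real.sin (x * Real.sin t)

lemma cos_odd_add_pi (p : ℤ) (hp : Odd p) (t : ℝ) :
    Real.cos (p * (t + π)) = - Real.cos (p * t) := by
  obtain ⟨k, rfl⟩ := hp
  have : ((2 * k + 1 : ℤ) : ℝ) * (t + π) = (((2 * k + 1 : ℤ) : ℝ) * t + π) + k * (2 * π) := by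
    push_cast; ring
  rw [this, Real.cos_add_int_mul_two_pi, Real.cos_add_pi]

lemma sin_odd_add_pi (p : ℤ) (hp : Odd p) (t : ℝ) :
    Real.sin (p * (t + π)) = - Real.sin (p * t) := by
  obtain ⟨k, rfl⟩ := hp
  have : ((2 * k + 1 : ℤ) : ℝ) * (t + π) = (((2 * k + 1 : ℤ) : ℝ) * t + π) + k * (2 * π) := by
    push_cast; ring
  rw [this, Real.sin_add_int_mul_two_pi, Real.sin_add_pi]

lemma cos_odd_half_pi (p : ℤ) (hp : Odd p) : Real.cos (p * (π / 2)) = 0 := by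
  have h := cos_odd_add_pi p hp (-(π / 2))
  have e : -(π / 2) + π = π / 2 := by ring
  rw [e, mul_neg, Real.cos_neg] at h
  linarith

lemma besK_eq_besL (p : ℤ) (hp : Odd p) (x : ℝ) : x * besK p x = p * besL p x := by
  have h : ∫ t in (-(π / 2))..(π / 2),
      (x * (Real.cos t * Real.cos (p * t) * Real.cos (x * Real.sin t))
        - p * (Real.sin (p * t) * Real.sin (x * Real.sin t)))
      = Real.cos (p * (π / 2)) * Real.sin (x * Real.sin (π / 2))
        - Real.cos (p * (-(π / 2))) * Real.sin (x * Real.sin (-(π / 2))) := by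
    apply intervalIntegral.integral_eq_sub_of_hasDerivAt
      (f := fun t => Real.cos (p * t) * Real.sin (x * Real.sin t))
    · intro t _
      have h1 : HasDerivAt (fun t : ℝ => (p : ℝ) * t) p t := by
        simpa using (hasDerivAt_id t).const_mul (p : ℝ)
      have h2 := ((Real.hasDerivAt_sin t).const_mul x).sin
      convert! h1.cos.mul h2 using 1
      ring
    · apply Continuous.intervalIntegrable
      fun_prop
  rw [intervalIntegral.integral_sub (Continuous.intervalIntegrable (by fun_prop) _ _)
    (Continuous.intervalIntegrable (by fun_prop) _ _), intervalIntegral.integral_const_mul,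
    intervalIntegral.integral_const_mul, mul_neg, Real.cos_neg, cos_odd_half_pi p hp] at h
  simp only [besK, besL]
  linarith

lemma besL_eq_besselJ (p : ℤ) (hp : Odd p) (x : ℝ) : besL p x = π * besselJ p x := by
  have hper : Function.Periodic (fun t => Real.sin (p * t) * Real.sin (x * Real.sin t)) π := by
    intro t
    simp only [sin_odd_add_pi p hp, Real.sin_add_pi, mul_neg, Real.sin_neg, neg_mul, neg_neg]
  have h1 := hper.intervalIntegral_add_eq (-(π / 2)) 0
  have e : -(π / 2) + π = π / 2 := by ring
  rw [e, zero_add] at h1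
  have h2 : ∫ t in (0 : ℝ)..π, Real.cos (p * t) * Real.cos (x * Real.sin t) = 0 := by
    have h3 := intervalIntegral.integral_comp_sub_left (a := 0) (b := π)
      (fun t => Real.cos (p * t) * Real.cos (x * Real.sin t)) π
    have h4 : ∀ t : ℝ, Real.cos (p * (π - t)) * Real.cos (x * Real.sin (π - t))
        = - (Real.cos (p * t) * Real.cos (x * Real.sin t)) := by
      intro t
      have : π - t = -t + π := by ring
      rw [Real.sin_pi_sub, this, cos_odd_add_pi p hp, mul_neg, Real.cos_neg]
      ring
    simp only [h4, intervalIntegral.integral_neg, sub_self, sub_zero] at h3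
    linarith
  unfold besL besselJ
  rw [h1]
  simp only [Real.cos_sub]
  rw [intervalIntegral.integral_add (Continuous.intervalIntegrable (by fun_prop) _ _)
    (Continuous.intervalIntegrable (by fun_prop) _ _), h2]
  field_simp
  simp

lemma besL_bound_aux (p : ℤ) (x β : ℝ) (hx : 0 < x) (h0 : 0 ≤ β) (hβ : β < π / 2) :
    |besL p x| ≤ 2 * (π / 2 - β) + (2 + π * (|(p : ℝ)| + 1)) / (x * Real.cos β ^ 2) := by
  have hc : 0 < Real.cos β := Real.cos_pos_of_mem_Ioo ⟨by linarith, hβ⟩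
  have hc1 : Real.cos β ≤ 1 := Real.cos_le_one β
  have hcos : ∀ t ∈ Set.uIcc (-β) β, Real.cos β ≤ Real.cos t := by
    intro t ht
    rw [Set.uIcc_of_le (by linarith)] at ht
    rw [← Real.cos_abs t]
    exact Real.cos_le_cos_of_nonneg_of_le_pi (abs_nonneg t) (by linarith) (abs_le.2 ht)
  have hcont : Continuous (fun t => Real.sin (p * t) * Real.sin (x * Real.sin t)) := by fun_prop
  have hb : ∀ t : ℝ, ‖Real.sin (p * t) * Real.sin (x * Real.sin t)‖ ≤ 1 := by
    intro t
    rw [norm_mul]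
    exact mul_le_one₀ (Real.abs_sin_le_one _) (norm_nonneg _) (Real.abs_sin_le_one _)
  set q : ℝ → ℝ := fun t => Real.cos (x * Real.sin t) / x *
    (p * Real.cos (p * t) / Real.cos t + Real.sin (p * t) * Real.sin t / Real.cos t ^ 2) with hq
  have hqc : ContinuousOn q (Set.uIcc (-β) β) := by
    have h1 : ∀ t ∈ Set.uIcc (-β) β, Real.cos t ≠ 0 := fun t ht => by
      have := hcos t ht; linarith
    have h2 : ∀ t ∈ Set.uIcc (-β) β, Real.cos t ^ 2 ≠ 0 := fun t ht => pow_ne_zero _ (h1 t ht)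
    apply ContinuousOn.mul
    · apply Continuous.continuousOn; fun_prop
    · apply ContinuousOn.add
      · exact ContinuousOn.div (by fun_prop) (by fun_prop) h1
      · exact ContinuousOn.div (by fun_prop) (by fun_prop) h2
  have hM : ∫ t in (-β)..β, (Real.sin (p * t) * Real.sin (x * Real.sin t) - q t)
      = - (Real.sin (p * β) * Real.cos (x * Real.sin β) / (x * Real.cos β))
        - - (Real.sin (p * (-β)) * Real.cos (x * Real.sin (-β)) / (x * Real.cos (-β))) := by
    apply intervalIntegral.integral_eq_sub_of_hasDerivAt
      (f := fun t => - (Real.sin (p * t) * Real.cos (x * Real.sin t) / (x * Real.cos t)))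
    · intro t ht
      have hct : Real.cos t ≠ 0 := by have := hcos t ht; linarith
      have h1 : HasDerivAt (fun t : ℝ => (p : ℝ) * t) p t := by
        simpa using (hasDerivAt_id t).const_mul (p : ℝ)
      have h2 := ((Real.hasDerivAt_sin t).const_mul x).cos
      have h3 := (Real.hasDerivAt_cos t).const_mul x
      convert! ((h1.sin.mul h2).div h3 (mul_ne_zero hx.ne' hct)).neg using 1
      simp only [hq, Pi.mul_apply]
      field_simp
      ring
    · exact (hcont.continuousOn.sub hqc).intervalIntegrable
  rw [intervalIntegral.integral_sub (hcont.intervalIntegrable _ _) hqc.intervalIntegrable] at hM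
  have hqb : ‖∫ t in (-β)..β, q t‖ ≤ ((|(p : ℝ)| + 1) / (x * Real.cos β ^ 2)) * |β - -β| := by
    apply intervalIntegral.norm_integral_le_of_norm_le_const
    intro t ht
    have hct := hcos t (Set.uIoc_subset_uIcc ht)
    have hct1 := Real.cos_le_one t
    have hct0 : 0 < Real.cos t := by linarith
    have hsq : Real.cos β ^ 2 ≤ Real.cos t ^ 2 := by gcongr
    have hsq' : Real.cos β ^ 2 ≤ Real.cos t := by nlinarith
    have hb2 : 0 < Real.cos β ^ 2 := by positivity
    have a1 : |p * Real.cos (p * t) / Real.cos t| ≤ |(p : ℝ)| / Real.cos β ^ 2 := by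
      rw [abs_div, abs_mul, abs_of_pos hct0]
      have := mul_le_of_le_one_right (abs_nonneg (p : ℝ)) (Real.abs_cos_le_one (p * t))
      gcongr
    have a2 : |Real.sin (p * t) * Real.sin t / Real.cos t ^ 2| ≤ 1 / Real.cos β ^ 2 := by
      rw [abs_div, abs_mul, abs_of_pos (by positivity : 0 < Real.cos t ^ 2)]
      have := mul_le_one₀ (Real.abs_sin_le_one (p * t)) (abs_nonneg _) (Real.abs_sin_le_one t)
      gcongr
    have a3 : |Real.cos (x * Real.sin t) / x| ≤ 1 / x := by
      rw [abs_div, abs_of_pos hx]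
      have := Real.abs_cos_le_one (x * Real.sin t)
      gcongr
    rw [Real.norm_eq_abs, hq]
    simp only
    rw [abs_mul]
    calc _ ≤ 1 / x * (|(p : ℝ)| / Real.cos β ^ 2 + 1 / Real.cos β ^ 2) := by
          gcongr
          exact (abs_add_le _ _).trans (add_le_add a1 a2)
      _ = _ := by field_simp
  have hbd : |Real.sin (p * β) * Real.cos (x * Real.sin β) / (x * Real.cos β)|
      ≤ 1 / (x * Real.cos β ^ 2) := by
    rw [abs_div, abs_mul, abs_of_pos (by positivity : 0 < x * Real.cos β)]
    have := mul_le_one₀ (Real.abs_sin_le_one (p * β)) (abs_nonneg _)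
      (Real.abs_cos_le_one (x * Real.sin β))
    have h2 : Real.cos β ^ 2 ≤ Real.cos β := by nlinarith
    gcongr
  have hA := intervalIntegral.norm_integral_le_of_norm_le_const (a := -(π / 2)) (b := -β)
    (fun t _ => hb t)
  have hB := intervalIntegral.norm_integral_le_of_norm_le_const (a := β) (b := π / 2)
    (fun t _ => hb t)
  have hsum : besL p x = (∫ t in (-(π / 2))..(-β), Real.sin (p * t) * Real.sin (x * Real.sin t))
      + (∫ t in (-β)..β, Real.sin (p * t) * Real.sin (x * Real.sin t))
      + ∫ t in β..(π / 2), Real.sin (p * t) * Real.sin (x * Real.sin t) := by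
    rw [intervalIntegral.integral_add_adjacent_intervals (hcont.intervalIntegrable _ _)
      (hcont.intervalIntegrable _ _), intervalIntegral.integral_add_adjacent_intervals
      (hcont.intervalIntegrable _ _) (hcont.intervalIntegrable _ _)]
    rfl
  rw [abs_of_nonneg (by linarith : (0 : ℝ) ≤ β - -β)] at hqb
  rw [abs_of_nonneg (by linarith)] at hA hB
  simp only [mul_neg, Real.sin_neg, Real.cos_neg, neg_mul, neg_div] at hM
  rw [Real.norm_eq_abs, abs_le] at hA hB hqb
  rw [abs_le] at hbd
  have hE : (|(p : ℝ)| + 1) / (x * Real.cos β ^ 2) * (β - -β)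
      ≤ (|(p : ℝ)| + 1) / (x * Real.cos β ^ 2) * π := by
    gcongr
    linarith
  have hsplit : (2 + π * (|(p : ℝ)| + 1)) / (x * Real.cos β ^ 2)
      = 2 * (1 / (x * Real.cos β ^ 2)) + (|(p : ℝ)| + 1) / (x * Real.cos β ^ 2) * π := by
    ring
  rw [hsplit, hsum, abs_le]
  constructor <;> linarith [hA.1, hA.2, hB.1, hB.2, hqb.1, hqb.2, hbd.1, hbd.2]

lemma besL_bound (p : ℤ) : ∃ C : ℝ, 0 ≤ C ∧ ∀ x : ℝ, 1 ≤ x →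
    |besL p x| ≤ C * x ^ (-(1 / 3) : ℝ) := by
  refine ⟨2 + (2 + π * (|(p : ℝ)| + 1)) * (π ^ 2 / 4), by positivity, fun x hx => ?_⟩
  have hx0 : 0 < x := by linarith
  set d : ℝ := x ^ (-(1 / 3) : ℝ) with hd
  have hd0 : 0 < d := by positivity
  have hd1 : d ≤ 1 := Real.rpow_le_one_of_one_le_of_nonpos hx (by norm_num)
  have hxd : x * d ^ 3 = 1 := by
    rw [hd, ← Real.rpow_natCast, ← Real.rpow_mul hx0.le]
    norm_num
    rw [Real.rpow_neg_one]
    field_simp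
  have hpi := Real.pi_gt_three
  have h := besL_bound_aux p x (π / 2 - d) hx0 (by linarith) (by linarith)
  rw [Real.cos_pi_div_two_sub] at h
  have hs := Real.mul_le_sin hd0.le (by linarith : d ≤ π / 2)
  have hs2 : (2 / π * d) ^ 2 ≤ Real.sin d ^ 2 := by gcongr
  have : (2 + π * (|(p : ℝ)| + 1)) / (x * Real.sin d ^ 2)
      ≤ (2 + π * (|(p : ℝ)| + 1)) / (x * (2 / π * d) ^ 2) := by gcongr
  have e : (2 + π * (|(p : ℝ)| + 1)) / (x * (2 / π * d) ^ 2)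
      = (2 + π * (|(p : ℝ)| + 1)) * (π ^ 2 / 4) * d := by
    rw [div_eq_iff (by positivity)]
    have : (2 + π * (|(p : ℝ)| + 1)) * (π ^ 2 / 4) * d * (x * (2 / π * d) ^ 2)
      = (2 + π * (|(p : ℝ)| + 1)) * (x * d ^ 3) := by field_simp; ring
    rw [this, hxd, mul_one]
  linarith

lemma besK_continuous (p : ℤ) : Continuous (besK p) := by
  unfold besK
  apply intervalIntegral.continuous_parametric_intervalIntegral_of_continuous'
  simp only [Function.uncurry_def]
  fun_prop

lemma besK_neg (p : ℤ) (x : ℝ) : besK p (-x) = besK p x := by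
  simp [besK]

lemma besK_integrable (p : ℤ) (hp : Odd p) : MeasureTheory.Integrable (besK p) := by
  obtain ⟨C, hC, hb⟩ := besL_bound p
  refine (besK_continuous p).locallyIntegrable.integrable_of_isBigO_atTop_of_norm_isNegInvariant
    (g := fun x : ℝ => x ^ (-(4 / 3) : ℝ)) ?_ ?_ ?_
  · refine Filter.Eventually.of_forall fun x => ?_
    simp [besK_neg]
  · apply Asymptotics.IsBigO.of_bound (|(p : ℝ)| * C)
    filter_upwards [Filter.eventually_ge_atTop 1] with x hx
    have hx0 : 0 < x := by linarith
    have h1 : besK p x = p * besL p x / x := by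
      rw [← besK_eq_besL p hp]; field_simp
    have h2 : x ^ (-(4 / 3) : ℝ) = x ^ (-(1 / 3) : ℝ) / x := by
      rw [← Real.rpow_sub_one hx0.ne']; norm_num
    rw [h1, h2, Real.norm_eq_abs, Real.norm_eq_abs, abs_div, abs_mul, abs_div, abs_of_pos hx0,
      abs_of_pos (by positivity : 0 < x ^ (-(1 / 3) : ℝ)), mul_div_assoc', mul_assoc]
    gcongr
    exact hb x hx
  · rw [integrableAtFilter_rpow_atTop_iff]; norm_num

/-- The function whose Fourier transform we invert. -/
def besH (p : ℤ) (u : ℝ) : ℂ := (Real.cos (p * Real.arcsin u) : ℂ)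

lemma besH_continuous (p : ℤ) : Continuous (besH p) := by
  unfold besH
  have := Real.continuous_arcsin
  fun_prop

lemma besH_zero (p : ℤ) (hp : Odd p) (u : ℝ) (hu : u ∉ Set.Ioc (-1 : ℝ) 1) : besH p u = 0 := by
  unfold besH
  rw [Set.mem_Ioc, not_and_or, not_lt, not_le] at hu
  rcases hu with h | h
  · rw [Real.arcsin_of_le_neg_one h, mul_neg, Real.cos_neg, cos_odd_half_pi p hp]; simp
  · rw [Real.arcsin_of_one_le h.le, cos_odd_half_pi p hp]; simp

lemma besH_integrable (p : ℤ) (hp : Odd p) : MeasureTheory.Integrable (besH p) := by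
  apply (besH_continuous p).integrable_of_hasCompactSupport
  apply HasCompactSupport.intro (isCompact_Icc (a := (-1 : ℝ)) (b := 1))
  intro u hu
  exact besH_zero p hp u fun h => hu ⟨h.1.le, h.2⟩

open FourierTransform in
lemma besH_fourier (p : ℤ) (hp : Odd p) (w : ℝ) : 𝓕 (besH p) w = (besK p (2 * π * w) : ℂ) := by
  rw [Real.fourier_real_eq_integral_exp_smul]
  rw [← intervalIntegral.integral_eq_integral_of_support_subset (a := -1) (b := 1)]
  swap
  · intro u hu
    by_contra h
    exact hu (by simp [besH_zero p hp u h])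
  have hcv := intervalIntegral.integral_comp_smul_deriv (a := -(π / 2)) (b := π / 2)
    (f := Real.sin) (f' := Real.cos)
    (g := fun v => Complex.exp (↑(-2 * π * v * w) * Complex.I) • besH p v)
    (fun x _ => Real.hasDerivAt_sin x) Real.continuous_cos.continuousOn
    (by have := besH_continuous p; fun_prop)
  rw [Real.sin_neg, Real.sin_pi_div_two] at hcv
  rw [← hcv]
  have hcongr : ∫ t in (-(π / 2))..(π / 2), Real.cos t •
      ((fun v => Complex.exp (↑(-2 * π * v * w) * Complex.I) • besH p v) ∘ Real.sin) t
      = ∫ t in (-(π / 2))..(π / 2),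
        (((Real.cos t * Real.cos (p * t) * Real.cos (2 * π * w * Real.sin t) : ℝ) : ℂ)
        - ((Real.cos t * Real.cos (p * t) * Real.sin (2 * π * w * Real.sin t) : ℝ) : ℂ)
          * Complex.I) := by
    apply intervalIntegral.integral_congr
    intro t ht
    rw [Set.uIcc_of_le (by linarith [Real.pi_pos])] at ht
    have e : ((-2 * π * Real.sin t * w : ℝ) : ℂ) = -((2 * π * w * Real.sin t : ℝ) : ℂ) := by
      push_cast; ring
    simp only [Function.comp_apply, besH, Real.arcsin_sin ht.1 ht.2, e]
    rw [Complex.exp_mul_I, Complex.cos_neg, Complex.sin_neg, ← Complex.ofReal_cos,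
      ← Complex.ofReal_sin, smul_eq_mul, Complex.real_smul]
    push_cast
    ring
  rw [hcongr, intervalIntegral.integral_sub (Continuous.intervalIntegrable (by fun_prop) _ _)
    (Continuous.intervalIntegrable (by fun_prop) _ _), intervalIntegral.integral_mul_const,
    intervalIntegral.integral_ofReal, intervalIntegral.integral_ofReal]
  have hodd : ∫ t in (-(π / 2))..(π / 2),
      Real.cos t * Real.cos (p * t) * Real.sin (2 * π * w * Real.sin t) = 0 := by
    have h := intervalIntegral.integral_comp_neg (a := -(π / 2)) (b := π / 2)
      (fun t => Real.cos t * Real.cos (p * t) * Real.sin (2 * π * w * Real.sin t))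
    simp only [mul_neg, Real.cos_neg, Real.sin_neg, neg_neg, intervalIntegral.integral_neg] at h
    linarith
  rw [hodd]
  simp [besK]

open FourierTransform in
lemma besK_inversion (p : ℤ) (hp : Odd p) (a : ℝ) :
    ∫ x in Set.Ioi (0 : ℝ), Real.cos (a * x) * besK p x = π * Real.cos (p * Real.arcsin a) := by
  have hF : 𝓕 (besH p) = fun w => (besK p (2 * π * w) : ℂ) := funext (besH_fourier p hp)
  have hKi : MeasureTheory.Integrable (fun w => besK p (2 * π * w)) :=
    (besK_integrable p hp).comp_mul_left' (by positivity)
  have hinv := congrFun ((besH_continuous p).fourierInv_fourier_eq (besH_integrable p hp)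
    (by rw [hF]; exact hKi.ofReal)) a
  rw [Real.fourierInv_eq', hF] at hinv
  have hre := congrArg Complex.re hinv
  have hint : MeasureTheory.Integrable (fun v : ℝ =>
      Complex.exp (((2 * π * inner ℝ v a : ℝ) : ℂ) * Complex.I) • (besK p (2 * π * v) : ℂ)) := by
    refine MeasureTheory.Integrable.bdd_mul (c := 1) hKi.ofReal ?_ ?_
    · apply Continuous.aestronglyMeasurable; fun_prop
    · exact Filter.Eventually.of_forall fun v => (Complex.norm_exp_ofReal_mul_I _).le
  have hre2 := integral_re hint
  simp only [RCLike.re_to_complex] at hre2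
  rw [← hre2] at hre
  have hfun : ∀ v : ℝ, (Complex.exp (((2 * π * inner ℝ v a : ℝ) : ℂ) * Complex.I) •
      (besK p (2 * π * v) : ℂ)).re = (fun y => Real.cos (a * y) * besK p y) (2 * π * v) := by
    intro v
    rw [smul_eq_mul, Complex.re_mul_ofReal, Complex.exp_ofReal_mul_I_re]
    simp only [RCLike.inner_apply, conj_trivial]
    congr 2
    ring
  simp only [hfun] at hre
  rw [MeasureTheory.Measure.integral_comp_mul_left (fun y => Real.cos (a * y) * besK p y),
    abs_of_pos (by positivity)] at hre
  have habs : ∀ y : ℝ, Real.cos (a * y) * besK p y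
      = (fun z => Real.cos (a * z) * besK p z) |y| := by
    intro y
    rcases abs_choice y with h | h <;> simp [h, besK_neg]
  rw [MeasureTheory.integral_congr_ae (Filter.Eventually.of_forall habs),
    integral_comp_abs (f := fun z => Real.cos (a * z) * besK p z)] at hre
  simp only [besH, Complex.ofReal_re, smul_eq_mul] at hre
  rw [← hre]
  field_simp

/-- For `a ∈ (0,1)` and odd integer `p`,
`∫₀^∞ cos(ax) J_p(x)/x dx = (1/p) cos(p arcsin a)`. -/
theorem integral_cos_mul_besselJ_div_self (a : ℝ) (ha0 : 0 < a) (ha1 : a < 1)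
    (p : ℤ) (hp : Odd p) :
    ∫ x in Set.Ioi (0 : ℝ), Real.cos (a * x) * besselJ p x / x =
      (1 / (p : ℝ)) * Real.cos (p * Real.arcsin a) := by
  have hp0 : (p : ℝ) ≠ 0 := by
    intro h
    have : p = 0 := by exact_mod_cast h
    subst this
    simp at hp
  have h : ∫ x in Set.Ioi (0 : ℝ), Real.cos (a * x) * besselJ p x / x
      = ∫ x in Set.Ioi (0 : ℝ), (1 / (π * p)) * (Real.cos (a * x) * besK p x) := by
    apply MeasureTheory.setIntegral_congr_fun measurableSet_Ioi
    intro x hx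
    have hx0 : x ≠ 0 := (Set.mem_Ioi.1 hx).ne'
    have h1 := besK_eq_besL p hp x
    rw [besL_eq_besselJ p hp] at h1
    have h2 : besK p x = p * (π * besselJ p x) / x := by rw [← h1]; field_simp
    simp only [h2]
    field_simp
  rw [h, MeasureTheory.integral_const_mul, besK_inversion p hp]
  field_simp
end
end
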